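/- arXiv:2510.11708 — 2 statements merged into one kernel-verified Lean document; each statement's English description precedes it below -/
import Mathlib

section
/- Let K be a real n×p matrix and H a real k×p matrix of full row rank k whose rows all lie in the row space of K, and set B := K (KᵀK)⁺ Hᵀ. Let γₙ denote the standard Gaussian measure on ℝⁿ (the product over Fin n of the real Gaussian with mean 0 and variance 1). Fix x* ∈ ℝ^p and put μ := Hx*. Then the pushforward of γₙ under the map ε ↦ (Bᵀ(Kx* + ε) − μ)ᵀ (BᵀB)⁻¹ (Bᵀ(Kx* + ε) − μ) equals the pushforward of γₙ under the map ε ↦ Σ_{i=1}^{k} ε_i² (the sum of squares of the first k coordinates); that is, the statistic λ²(μ, Kx*+ε) follows a chi-squared law with k degrees of freedom. -/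
/-!
The identities `Bᵀ K = H` and `det (Bᵀ B) ≠ 0` turn the statistic into the quadratic form
`ε ↦ (Bᵀ ε)ᵀ (Bᵀ B)⁻¹ (Bᵀ ε)`, the squared length of the orthogonal projection of `ε` onto the
`k`-dimensional column space of `B`. In an orthonormal basis of `ℝⁿ` whose first `k` vectors span
that column space (`exists_adapted_basis`) this squared length is the sum of the squares of the
first `k` coordinates (`quadForm_eq`), and the standard Gaussian measure is invariant under the
orthogonal change of coordinates (`map_basis_stdGaussian`).
-/

open Matrix MeasureTheory ProbabilityTheory

/-- The four Penrose conditions, uniquely characterizing the Moore–Penrose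
pseudoinverse `P` of `M`. -/
def IsMoorePenrose {a b : Type*} [Fintype a] [Fintype b]
    (M : Matrix a b ℝ) (P : Matrix b a ℝ) : Prop :=
  M * P * M = M ∧ P * M * P = P ∧ (M * P)ᵀ = M * P ∧ (P * M)ᵀ = P * M

/-- The standard Gaussian measure on `ℝⁿ = (Fin n → ℝ)`. -/
noncomputable def stdGaussian (n : ℕ) : Measure (Fin n → ℝ) :=
  Measure.pi fun _ => gaussianReal 0 1

/-- `K Gᵀ (Kᵀ K) = K` for every generalized inverse `G` of `Kᵀ K`: both sides agree after
multiplication by `Kᵀ` on the left, and `Kᵀ K N = 0` forces `K N = 0`. -/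
lemma mul_transpose_ginv_mul {n p : ℕ} (K : Matrix (Fin n) (Fin p) ℝ)
    (G : Matrix (Fin p) (Fin p) ℝ) (hG : Kᵀ * K * G * (Kᵀ * K) = Kᵀ * K) :
    K * Gᵀ * (Kᵀ * K) = K := by
  have h1 : Kᵀ * K * (Gᵀ * (Kᵀ * K) - 1) = 0 := by
    have h := congrArg Matrix.transpose hG
    simp only [Matrix.transpose_mul, Matrix.transpose_transpose] at h
    rw [Matrix.mul_sub, Matrix.mul_one, sub_eq_zero]
    simpa only [Matrix.mul_assoc] using h
  have h2 : K * (Gᵀ * (Kᵀ * K) - 1) = 0 := by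
    rw [← Matrix.conjTranspose_eq_transpose_of_trivial K] at h1 ⊢
    exact (Matrix.conjTranspose_mul_self_mul_eq_zero K _).1 h1
  rw [Matrix.mul_sub, Matrix.mul_one, sub_eq_zero] at h2
  rw [Matrix.mul_assoc, h2]

lemma isUnit_det_gram {n k : ℕ} (B : Matrix (Fin n) (Fin k) ℝ) (hB : B.rank = k) :
    IsUnit (Bᵀ * B).det := by
  have h : (Bᵀ * B).rank = k := by rw [Matrix.rank_transpose_mul_self, hB]
  rw [← Matrix.isUnit_iff_isUnit_det, ← Matrix.mulVec_surjective_iff_isUnit]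
  have h' : LinearMap.range (Bᵀ * B).mulVecLin = ⊤ := by
    apply Submodule.eq_top_of_finrank_eq
    rw [← Matrix.rank, h]
    simp
  exact LinearMap.range_eq_top.1 h'

/-- An orthonormal basis of `ℝⁿ` whose first `k` vectors lie in the column space of `B` and whose
remaining vectors are orthogonal to it. -/
lemma exists_adapted_basis {n k : ℕ} (B : Matrix (Fin n) (Fin k) ℝ) (hB : IsUnit (Bᵀ * B).det) :
    ∃ b : OrthonormalBasis (Fin n) ℝ (EuclideanSpace ℝ (Fin n)),
      (∀ i : Fin n, (i : ℕ) < k → ∃ z : Fin k → ℝ, B *ᵥ z = (b i).ofLp) ∧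
      (∀ i : Fin n, ¬ (i : ℕ) < k → Bᵀ *ᵥ (b i).ofLp = 0) := by
  set L := Matrix.toLpLin 2 2 B with hL
  have hinj : Function.Injective L := by
    rw [← LinearMap.ker_eq_bot, LinearMap.ker_eq_bot']
    intro z hz
    have h0 : B *ᵥ z.ofLp = 0 := congrArg WithLp.ofLp hz
    have h1 : (Bᵀ * B)⁻¹ *ᵥ ((Bᵀ * B) *ᵥ z.ofLp) = 0 := by
      rw [← Matrix.mulVec_mulVec, h0]; simp
    rw [Matrix.mulVec_mulVec, Matrix.nonsing_inv_mul _ hB, Matrix.one_mulVec] at h1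
    exact (WithLp.ofLp_injective 2) h1
  have hfin : Module.finrank ℝ (LinearMap.range L) = k := by
    rw [LinearMap.finrank_range_of_inj hinj]; simp
  have hkn : k ≤ n := by
    have := Submodule.finrank_le (LinearMap.range L)
    rw [hfin] at this
    simpa using this
  let c : OrthonormalBasis (Fin k) ℝ (LinearMap.range L) :=
    (stdOrthonormalBasis ℝ (LinearMap.range L)).reindex (finCongr hfin)
  let v : Fin n → EuclideanSpace ℝ (Fin n) :=
    fun i => if h : (i : ℕ) < k then (c ⟨i, h⟩ : EuclideanSpace ℝ (Fin n)) else 0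
  let s : Set (Fin n) := {i | (i : ℕ) < k}
  have hv : Orthonormal ℝ (s.domRestrict v) := by
    have h1 : s.domRestrict v = (fun j : Fin k => (c j : EuclideanSpace ℝ (Fin n))) ∘
        (fun i : s => (⟨i.1, i.2⟩ : Fin k)) := by
      funext i
      have hi : ((i : Fin n) : ℕ) < k := i.2
      simp [v, hi]
    rw [h1]
    refine Orthonormal.comp ?_ _ ?_
    · exact c.orthonormal.comp_linearIsometry (LinearMap.range L).subtypeₗᵢ
    · intro i j hij
      simpa [Subtype.ext_iff, Fin.ext_iff] using hij
  obtain ⟨b, hb⟩ := hv.exists_orthonormalBasis_extension_of_card_eq (by simp)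
  have hbc : ∀ i : Fin n, ∀ h : (i : ℕ) < k,
      b i = (c ⟨i, h⟩ : EuclideanSpace ℝ (Fin n)) := by
    intro i h
    rw [hb i h]
    simp [v, h]
  refine ⟨b, fun i hi => ?_, fun i hi => ?_⟩
  · obtain ⟨z, hz⟩ := (c ⟨i, hi⟩).2
    exact ⟨z.ofLp, by rw [hbc i hi, ← hz]; rfl⟩
  · have horth : ∀ y : LinearMap.range L,
        inner ℝ (y : EuclideanSpace ℝ (Fin n)) (b i) = 0 := by
      intro y
      rw [← c.sum_repr y]
      push_cast
      rw [sum_inner]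
      refine Finset.sum_eq_zero fun j _ => ?_
      rw [inner_smul_left]
      have hj := hbc ⟨j, j.2.trans_le hkn⟩ j.2
      have hne : (⟨j, j.2.trans_le hkn⟩ : Fin n) ≠ i := by
        rintro rfl; exact hi j.2
      have h0 : inner ℝ (c j : EuclideanSpace ℝ (Fin n)) (b i) = 0 :=
        hj ▸ b.orthonormal.2 hne
      rw [h0, mul_zero]
    -- `‖Bᵀ bᵢ‖² = ⟨B (Bᵀ bᵢ), bᵢ⟩`, and `B (Bᵀ bᵢ)` lies in the column space.
    have h := horth ⟨L (WithLp.toLp 2 (Bᵀ *ᵥ (b i).ofLp)), LinearMap.mem_range_self _ _⟩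
    rw [EuclideanSpace.inner_eq_star_dotProduct] at h
    simp only [hL, Matrix.toLpLin_apply, star_trivial] at h
    rw [Matrix.dotProduct_mulVec, ← Matrix.mulVec_transpose] at h
    exact dotProduct_self_eq_zero.1 h

/-- The standard Gaussian measure is invariant under the orthogonal map sending the standard basis
to `b`. -/
lemma map_basis_stdGaussian {n : ℕ}
    (b : OrthonormalBasis (Fin n) ℝ (EuclideanSpace ℝ (Fin n))) :
    (_root_.stdGaussian n).map (fun x => ∑ i, x i • (b i).ofLp) = _root_.stdGaussian n := by
  have h := (map_pi_eq_stdGaussian (ι := Fin n)).trans (stdGaussian_eq_map_pi_orthonormalBasis b)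
  have h2 := congrArg (Measure.map (WithLp.ofLp : EuclideanSpace ℝ (Fin n) → Fin n → ℝ)) h
  rw [Measure.map_map (by fun_prop) (by fun_prop),
    Measure.map_map (by fun_prop) (by fun_prop)] at h2
  have e1 : (WithLp.ofLp : EuclideanSpace ℝ (Fin n) → Fin n → ℝ) ∘ WithLp.toLp 2 = id := rfl
  have e2 : ((WithLp.ofLp : EuclideanSpace ℝ (Fin n) → Fin n → ℝ) ∘ fun x : Fin n → ℝ =>
      ∑ i, x i • b i) = fun x => ∑ i, x i • (b i).ofLp := by
    funext x; simp
  rw [e1, e2, Measure.map_id] at h2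
  exact h2.symm

/-- In coordinates `x` with respect to a basis adapted to the column space of `B`, the quadratic
form of the orthogonal projection onto that space is the sum of the first `k` squares. Writing
`∑ i, x i • b i = B z + w` with `Bᵀ w = 0`, both sides equal `‖B z‖²`. -/
lemma quadForm_eq {n k : ℕ} (B : Matrix (Fin n) (Fin k) ℝ) (hB : IsUnit (Bᵀ * B).det)
    (b : OrthonormalBasis (Fin n) ℝ (EuclideanSpace ℝ (Fin n)))
    (h1 : ∀ i : Fin n, (i : ℕ) < k → ∃ z : Fin k → ℝ, B *ᵥ z = (b i).ofLp)
    (h2 : ∀ i : Fin n, ¬ (i : ℕ) < k → Bᵀ *ᵥ (b i).ofLp = 0) (x : Fin n → ℝ) :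
    (Bᵀ *ᵥ ∑ i, x i • (b i).ofLp) ⬝ᵥ ((Bᵀ * B)⁻¹ *ᵥ (Bᵀ *ᵥ ∑ i, x i • (b i).ofLp))
      = ∑ i : Fin n, if (i : ℕ) < k then (x i) ^ 2 else 0 := by
  have hz : ∀ i : Fin n, ∃ z : Fin k → ℝ, (i : ℕ) < k → B *ᵥ z = (b i).ofLp := by
    intro i
    by_cases hi : (i : ℕ) < k
    · obtain ⟨z, hz⟩ := h1 i hi
      exact ⟨z, fun _ => hz⟩
    · exact ⟨0, fun h => absurd h hi⟩
  choose z hz using hz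
  let y : Fin n → ℝ := fun i => if (i : ℕ) < k then x i else 0
  let Z : Fin k → ℝ := ∑ i, y i • z i
  have hBZ : B *ᵥ Z = ∑ i, y i • (b i).ofLp := by
    simp only [Z, Matrix.mulVec_sum, Matrix.mulVec_smul]
    refine Finset.sum_congr rfl fun i _ => ?_
    by_cases hi : (i : ℕ) < k
    · rw [hz i hi]
    · simp [y, hi]
  have hBt : Bᵀ *ᵥ ∑ i, x i • (b i).ofLp = (Bᵀ * B) *ᵥ Z := by
    rw [← Matrix.mulVec_mulVec, hBZ]
    simp only [Matrix.mulVec_sum, Matrix.mulVec_smul]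
    refine Finset.sum_congr rfl fun i _ => ?_
    by_cases hi : (i : ℕ) < k
    · simp [y, hi]
    · simp [h2 i hi]
  have hnorm : (B *ᵥ Z) ⬝ᵥ (B *ᵥ Z) = ∑ i, y i ^ 2 := by
    have e : B *ᵥ Z = (∑ i, y i • b i : EuclideanSpace ℝ (Fin n)).ofLp := by
      rw [hBZ]; simp
    have := b.orthonormal.inner_sum y y Finset.univ
    rw [EuclideanSpace.inner_eq_star_dotProduct, star_trivial, ← e] at this
    rw [this]
    simp [sq]
  rw [hBt, Matrix.mulVec_mulVec, Matrix.nonsing_inv_mul _ hB, Matrix.one_mulVec,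
    ← Matrix.mulVec_mulVec, Matrix.mulVec_transpose, ← Matrix.dotProduct_mulVec, hnorm]
  refine Finset.sum_congr rfl fun i _ => ?_
  by_cases hi : (i : ℕ) < k <;> simp [y, hi]

/-- the statistic `λ²(μ, Kx* + ε) = (Bᵀ(Kx*+ε) − μ)ᵀ(BᵀB)⁻¹(Bᵀ(Kx*+ε) − μ)`,
with `μ = Hx*` and `ε` standard Gaussian, follows a chi-squared law with `k` degrees of
freedom, i.e., it has the law of the sum of squares of the first `k` coordinates of `ε`. -/
theorem stmt3 {n p k : ℕ} (K : Matrix (Fin n) (Fin p) ℝ) (H : Matrix (Fin k) (Fin p) ℝ)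
    (hH : H.rank = k) (hrow : ∃ C : Matrix (Fin k) (Fin n) ℝ, H = C * K)
    (KtKpinv : Matrix (Fin p) (Fin p) ℝ) (hpinv : IsMoorePenrose (Kᵀ * K) KtKpinv)
    (B : Matrix (Fin n) (Fin k) ℝ) (hB : B = K * KtKpinv * Hᵀ)
    (xstar : Fin p → ℝ) :
    (stdGaussian n).map
        (fun ε => (Bᵀ.mulVec (K.mulVec xstar + ε) - H.mulVec xstar) ⬝ᵥ
          (Bᵀ * B)⁻¹.mulVec (Bᵀ.mulVec (K.mulVec xstar + ε) - H.mulVec xstar))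
      = (stdGaussian n).map
          (fun ε => ∑ i : Fin n, if (i : ℕ) < k then (ε i) ^ 2 else 0) := by
  obtain ⟨C, hC⟩ := hrow
  have hBK : Bᵀ * K = H := by
    rw [hB, hC]
    simp only [Matrix.transpose_mul, Matrix.transpose_transpose]
    have h := congrArg (C * ·) (mul_transpose_ginv_mul K KtKpinv hpinv.1)
    simpa only [Matrix.mul_assoc] using h
  have hrank : B.rank = k := by
    refine le_antisymm (by simpa using B.rank_le_width) ?_
    rw [← B.rank_transpose]
    calc k = (Bᵀ * K).rank := by rw [hBK, hH]
      _ ≤ Bᵀ.rank := Matrix.rank_mul_le_left _ _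
  have hdet := isUnit_det_gram B hrank
  have hstat : ∀ ε : Fin n → ℝ, Bᵀ *ᵥ (K *ᵥ xstar + ε) - H *ᵥ xstar = Bᵀ *ᵥ ε := by
    intro ε
    rw [Matrix.mulVec_add, Matrix.mulVec_mulVec, hBK, add_sub_cancel_left]
  simp only [hstat]
  obtain ⟨b, h1, h2⟩ := exists_adapted_basis B hdet
  have hmeas : Measurable fun ε : Fin n → ℝ =>
      (Bᵀ *ᵥ ε) ⬝ᵥ ((Bᵀ * B)⁻¹ *ᵥ (Bᵀ *ᵥ ε)) := by
    refine Continuous.measurable ?_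
    fun_prop
  have hmeasT : Measurable fun x : Fin n → ℝ => ∑ i, x i • (b i).ofLp := by
    refine Continuous.measurable ?_
    fun_prop
  conv_lhs => rw [← map_basis_stdGaussian b]
  rw [Measure.map_map hmeas hmeasT]
  congr 1
  funext x
  exact quadForm_eq B hdet b h1 h2 x
end

section
/- Let K be a real n×p matrix, H a real k×p matrix, A a real m×p matrix, and b ∈ ℝ^m. Define g : ℝ^p × ℝⁿ → ℝ by g(x, ε) := inf{‖K(z − K⁺ε)‖² : z ∈ ℝ^p, Hz = 0, Az ≤ b − Ax}, where K⁺ is the Moore–Penrose pseudoinverse of K. Then g is a jointly convex function of (x, ε) on the convex set {x ∈ ℝ^p : Ax ≤ b} × ℝⁿ; equivalently, the two-term statistic T²_{u,x}(ε) = inf{‖Kz − ε‖² : Hz = 0, Az ≤ b − Ax} − inf_{z} ‖Kz − ε‖² is jointly convex in (x, ε) on this set. -/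
/-!
Minimizing a jointly convex function over the slices of a convex set gives a convex function of the
parameters:
averaging near-optimal points `z₁`, `z₂` for two parameters gives a feasible point for the averaged
parameter, and convexity of `‖·‖²` bounds its value (`convexOn_projected`).

For the two-term statistic, the Penrose conditions give `Kᵀ(KK⁺ε − ε) = 0`, so by Pythagoras
`‖Kz − ε‖² = ‖K(z − K⁺ε)‖² + ‖KK⁺ε − ε‖²` for every `z` (`sqNorm_residual`). The last term does not
depend on `z` and is the unconstrained minimum, attained at `z = K⁺ε`; hence it cancels and the
statistic coincides with `g` wherever the feasible set is nonempty, in particular where `Ax ≤ b`.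
-/

open Matrix

/-- Squared Euclidean norm on `Fin n → ℝ`. -/
noncomputable def sqNorm {n : ℕ} (v : Fin n → ℝ) : ℝ := ∑ i, (v i) ^ 2

theorem sqNorm_nonneg' {n : ℕ} (v : Fin n → ℝ) : 0 ≤ sqNorm v :=
  Finset.sum_nonneg fun _ _ => sq_nonneg _

theorem sqNorm_convex {n : ℕ} (v w : Fin n → ℝ) {s t : ℝ} (hs : 0 ≤ s) (ht : 0 ≤ t)
    (hst : s + t = 1) : sqNorm (s • v + t • w) ≤ s * sqNorm v + t * sqNorm w := by
  unfold sqNorm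
  rw [Finset.mul_sum, Finset.mul_sum, ← Finset.sum_add_distrib]
  refine Finset.sum_le_sum fun i _ => ?_
  simpa using (even_two.convexOn_pow (𝕜 := ℝ)).2
    (Set.mem_univ (v i)) (Set.mem_univ (w i)) hs ht hst

/-- Pythagoras: `KK⁺` is the orthogonal projection onto the range of `K`. -/
theorem sqNorm_residual {n p : ℕ} {K : Matrix (Fin n) (Fin p) ℝ} {P : Matrix (Fin p) (Fin n) ℝ}
    (h : IsMoorePenrose K P) (z : Fin p → ℝ) (e : Fin n → ℝ) :
    sqNorm (K.mulVec z - e)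
      = sqNorm (K.mulVec (z - P.mulVec e)) + sqNorm (K.mulVec (P.mulVec e) - e) := by
  obtain ⟨h1, -, h3, -⟩ := h
  have hK : Kᵀ * (K * P) = Kᵀ := by
    rw [← h3, ← Matrix.transpose_mul, h1]
  have horth : ∀ w : Fin p → ℝ, K.mulVec w ⬝ᵥ (K.mulVec (P.mulVec e) - e) = 0 := by
    intro w
    rw [← Matrix.vecMul_transpose, ← Matrix.dotProduct_mulVec, Matrix.mulVec_sub,
      Matrix.mulVec_mulVec, Matrix.mulVec_mulVec, Matrix.mul_assoc, hK, sub_self, dotProduct_zero]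
  have hsplit : K.mulVec z - e
      = K.mulVec (z - P.mulVec e) + (K.mulVec (P.mulVec e) - e) := by
    rw [Matrix.mulVec_sub]; abel
  have hdot : ∀ v : Fin n → ℝ, sqNorm v = v ⬝ᵥ v := fun v => by
    simp [sqNorm, dotProduct, sq]
  rw [hsplit, hdot, hdot, hdot, add_dotProduct, dotProduct_add, dotProduct_add, horth,
    dotProduct_comm (K.mulVec (P.mulVec e) - e) (K.mulVec (z - P.mulVec e)), horth]
  ring

theorem convex_domain {n p m : ℕ} (A : Matrix (Fin m) (Fin p) ℝ) (b : Fin m → ℝ) :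
    Convex ℝ ({x : Fin p → ℝ | A.mulVec x ≤ b} ×ˢ (Set.univ : Set (Fin n → ℝ))) :=
  ((convex_Iic b).linear_preimage A.mulVecLin).prod convex_univ

/-- Convexity of `g`. No property of `P` is used: any linear image of `ε` may stand in for `K⁺ε`.
The condition `Ax ≤ b` makes `z = 0` feasible, so that the infimum is not the junk value of
`sInf ∅`. -/
theorem convexOn_projected {n p k m : ℕ} (K : Matrix (Fin n) (Fin p) ℝ)
    (H : Matrix (Fin k) (Fin p) ℝ) (A : Matrix (Fin m) (Fin p) ℝ) (b : Fin m → ℝ)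
    (P : Matrix (Fin p) (Fin n) ℝ) :
    ConvexOn ℝ ({x : Fin p → ℝ | A.mulVec x ≤ b} ×ˢ (Set.univ : Set (Fin n → ℝ)))
      (fun q : (Fin p → ℝ) × (Fin n → ℝ) =>
        sInf {t : ℝ | ∃ z : Fin p → ℝ, H.mulVec z = 0 ∧ A.mulVec z ≤ b - A.mulVec q.1 ∧
          t = sqNorm (K.mulVec (z - P.mulVec q.2))}) := by
  refine ⟨convex_domain A b, ?_⟩
  rintro ⟨x, e⟩ ⟨hx, -⟩ ⟨y, f⟩ ⟨hy, -⟩ s t hs ht hst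
  simp only [Set.mem_ofPred_eq] at hx hy
  -- The infimum need not be known to be attained, so the argument uses `δ`-optimal points.
  refine le_of_forall_pos_le_add fun δ hδ => ?_
  obtain ⟨_, ⟨z, hz0, hz, rfl⟩, hzδ⟩ := exists_lt_of_csInf_lt (s := {t : ℝ | ∃ z : Fin p → ℝ,
      H.mulVec z = 0 ∧ A.mulVec z ≤ b - A.mulVec x ∧ t = sqNorm (K.mulVec (z - P.mulVec e))})
    ⟨_, 0, by simp, by simpa using hx, rfl⟩ (lt_add_of_pos_right _ hδ)
  obtain ⟨_, ⟨w, hw0, hw, rfl⟩, hwδ⟩ := exists_lt_of_csInf_lt (s := {t : ℝ | ∃ z : Fin p → ℝ,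
      H.mulVec z = 0 ∧ A.mulVec z ≤ b - A.mulVec y ∧ t = sqNorm (K.mulVec (z - P.mulVec f))})
    ⟨_, 0, by simp, by simpa using hy, rfl⟩ (lt_add_of_pos_right _ hδ)
  have hvec : K.mulVec ((s • z + t • w) - P.mulVec (s • e + t • f))
      = s • K.mulVec (z - P.mulVec e) + t • K.mulVec (w - P.mulVec f) := by
    simp only [Matrix.mulVec_sub, Matrix.mulVec_add, Matrix.mulVec_smul, smul_sub]
    abel
  have hle : sInf {r : ℝ | ∃ z : Fin p → ℝ, H.mulVec z = 0 ∧
        A.mulVec z ≤ b - A.mulVec (s • x + t • y) ∧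
        r = sqNorm (K.mulVec (z - P.mulVec (s • e + t • f)))}
      ≤ sqNorm (K.mulVec ((s • z + t • w) - P.mulVec (s • e + t • f))) := by
    refine csInf_le ⟨0, ?_⟩ ⟨s • z + t • w, ?_, ?_, rfl⟩
    · rintro _ ⟨_, -, -, rfl⟩
      exact sqNorm_nonneg' _
    · simp [Matrix.mulVec_add, Matrix.mulVec_smul, hz0, hw0]
    · intro i
      have h1 := mul_le_mul_of_nonneg_left (hz i) hs
      have h2 := mul_le_mul_of_nonneg_left (hw i) ht
      have hb : b i = s * b i + t * b i := by rw [← add_mul, hst, one_mul]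
      simp only [Matrix.mulVec_add, Matrix.mulVec_smul, Pi.add_apply, Pi.sub_apply, Pi.smul_apply,
        smul_eq_mul] at h1 h2 ⊢
      linarith
  rw [hvec] at hle
  have hc := sqNorm_convex (K.mulVec (z - P.mulVec e)) (K.mulVec (w - P.mulVec f)) hs ht hst
  have h1 := mul_le_mul_of_nonneg_left hzδ.le hs
  have h2 := mul_le_mul_of_nonneg_left hwδ.le ht
  have hd : δ = s * δ + t * δ := by rw [← add_mul, hst, one_mul]
  simp only [Prod.smul_mk, Prod.mk_add_mk, smul_eq_mul]
  linarith

/-- `g(x, ε) = inf{‖K(z − K⁺ε)‖² : Hz = 0, Az ≤ b − Ax}` is jointly convex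
in `(x, ε)` on `{x : Ax ≤ b} × ℝⁿ`; equivalently, the two-term statistic
`T²ᵤ(x, ε) = inf{‖Kz − ε‖² : Hz = 0, Az ≤ b − Ax} − inf_z ‖Kz − ε‖²` is jointly convex
on this set. -/
theorem stmt10 {n p k m : ℕ} (K : Matrix (Fin n) (Fin p) ℝ) (H : Matrix (Fin k) (Fin p) ℝ)
    (A : Matrix (Fin m) (Fin p) ℝ) (b : Fin m → ℝ)
    (Kpinv : Matrix (Fin p) (Fin n) ℝ) (hKpinv : IsMoorePenrose K Kpinv) :
    ConvexOn ℝ ({x : Fin p → ℝ | A.mulVec x ≤ b} ×ˢ (Set.univ : Set (Fin n → ℝ)))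
      (fun q : (Fin p → ℝ) × (Fin n → ℝ) =>
        sInf {t : ℝ | ∃ z : Fin p → ℝ, H.mulVec z = 0 ∧ A.mulVec z ≤ b - A.mulVec q.1 ∧
          t = sqNorm (K.mulVec (z - Kpinv.mulVec q.2))})
    ∧ ConvexOn ℝ ({x : Fin p → ℝ | A.mulVec x ≤ b} ×ˢ (Set.univ : Set (Fin n → ℝ)))
      (fun q : (Fin p → ℝ) × (Fin n → ℝ) =>
        sInf {t : ℝ | ∃ z : Fin p → ℝ, H.mulVec z = 0 ∧ A.mulVec z ≤ b - A.mulVec q.1 ∧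
          t = sqNorm (K.mulVec z - q.2)}
        - sInf {t : ℝ | ∃ z : Fin p → ℝ, t = sqNorm (K.mulVec z - q.2)}) := by
  have hg := convexOn_projected K H A b Kpinv
  refine ⟨hg, hg.congr ?_⟩
  rintro ⟨x, e⟩ ⟨hx, -⟩
  simp only [Set.mem_ofPred_eq] at hx ⊢
  have hmin : IsLeast {t : ℝ | ∃ z : Fin p → ℝ, t = sqNorm (K.mulVec z - e)}
      (sqNorm (K.mulVec (Kpinv.mulVec e) - e)) := by
    refine ⟨⟨_, rfl⟩, ?_⟩
    rintro _ ⟨z, rfl⟩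
    rw [sqNorm_residual hKpinv z e]
    exact le_add_of_nonneg_left (sqNorm_nonneg' _)
  have himage : {t : ℝ | ∃ z : Fin p → ℝ, H.mulVec z = 0 ∧ A.mulVec z ≤ b - A.mulVec x ∧
        t = sqNorm (K.mulVec z - e)}
      = OrderIso.addRight (sqNorm (K.mulVec (Kpinv.mulVec e) - e)) ''
        {t : ℝ | ∃ z : Fin p → ℝ, H.mulVec z = 0 ∧ A.mulVec z ≤ b - A.mulVec x ∧
          t = sqNorm (K.mulVec (z - Kpinv.mulVec e))} := by
    ext t
    constructor
    · rintro ⟨z, h0, hz, rfl⟩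
      exact ⟨_, ⟨z, h0, hz, rfl⟩, (sqNorm_residual hKpinv z e).symm⟩
    · rintro ⟨_, ⟨z, h0, hz, rfl⟩, rfl⟩
      exact ⟨z, h0, hz, (sqNorm_residual hKpinv z e).symm⟩
  -- Translation commutes with `sInf` only for nonempty sets that are bounded below.
  rw [hmin.csInf_eq, himage, ← OrderIso.map_csInf']
  · simp
  · exact ⟨_, 0, by simp, by simpa using hx, rfl⟩
  · refine ⟨0, ?_⟩
    rintro _ ⟨_, -, -, rfl⟩
    exact sqNorm_nonneg' _
end
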